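/- For any k quaternion matrices H₁,…,H_k with H_j of dimensions n_j × n_{j+1}, the diamond product satisfies ‖H₁ ⋄ ⋯ ⋄ H_k‖₂ ≤ 3^{k−1} · ‖H₁‖₂ ⋯ ‖H_k‖₂. -/

import Mathlib

open scoped Quaternion Matrix
open MeasureTheory Filter Topology

noncomputable section

/-- The standard representation of a real quaternion `q = a + b·i + c·j + d·k` as the
`2 × 2` complex matrix `[[a+bi, c+di], [−c+di, a−bi]]`. -/
def quatToC2 (q : ℍ[ℝ]) : Matrix (Fin 2) (Fin 2) ℂ :=
  !![(q.re : ℂ) + q.imI * Complex.I, (q.imJ : ℂ) + q.imK * Complex.I;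
     (-q.imJ : ℂ) + q.imK * Complex.I, (q.re : ℂ) - q.imI * Complex.I]

/-- Entrywise complex representation `ψ` of a quaternion matrix: a `p × n` quaternion
matrix becomes a `2p × 2n` complex matrix. -/
def psi {p n : ℕ} (A : Matrix (Fin p) (Fin n) ℍ[ℝ]) :
    Matrix (Fin p × Fin 2) (Fin n × Fin 2) ℂ :=
  fun i j => quatToC2 (A i.1 j.1) i.2 j.2

/-- The 2-norm of a quaternion matrix: the L2 operator norm (i.e. the largest singular
value) of its complex representation `ψ(A)`. -/
def quatNorm2 {p n : ℕ} (A : Matrix (Fin p) (Fin n) ℍ[ℝ]) : ℝ :=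
  ‖LinearMap.toContinuousLinearMap (Matrix.toEuclideanLin (psi A))‖

/-- The increasingly ordered eigenvalues of a Hermitian complex matrix (junk value `0`
if the matrix is not Hermitian). -/
def sortedEigs {m : Type*} [Fintype m] [DecidableEq m] (M : Matrix m m ℂ) :
    Fin (Fintype.card m) → ℝ :=
  if h : M.IsHermitian then
    (h.eigenvalues ∘ (Fintype.equivFin m).symm) ∘
      Tuple.sort (h.eigenvalues ∘ (Fintype.equivFin m).symm)
  else 0

/-- `quatEig A k` is the `k`-th smallest eigenvalue (0-indexed) of a `p × p` quaternion
matrix `A` with `ψ(A)` Hermitian: the eigenvalues of `ψ(A)` come in coincident pairs, and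
we take one from each pair, i.e. every other entry of the increasingly sorted list of the
`2p` eigenvalues of `ψ(A)`. -/
def quatEig {p : ℕ} (A : Matrix (Fin p) (Fin p) ℍ[ℝ]) (k : Fin p) : ℝ :=
  sortedEigs (psi A) ⟨2 * k.val, by
    have h : Fintype.card (Fin p × Fin 2) = p * 2 := by simp
    have hk := k.isLt
    omega⟩

/-- `quatEigIdx A k` is `s_{k+1}(A)`, the `(k+1)`-st smallest eigenvalue of the quaternion
matrix `A` (0-indexed; junk value `0` if `k ≥ p`). -/
def quatEigIdx {p : ℕ} (A : Matrix (Fin p) (Fin p) ℍ[ℝ]) (k : ℕ) : ℝ :=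
  if h : k < p then quatEig A ⟨k, h⟩ else 0

open Classical in
/-- The diamond product `H₁ ⋄ ⋯ ⋄ H_k` of quaternion matrices `H j` of dimensions
`dims j × dims (j+1)`: its `(α, β)` entry is
`Σ h⁽¹⁾_{α t₂} h⁽²⁾_{t₂ t₃} ⋯ h⁽ᵏ⁾_{t_k β}`, the sum running over all
`t_j ∈ {1,…,dims j}` (with `t₁ = α`, `t_{k+1} = β`) subject to the restrictions
`t₁ ≠ t₃, t₂ ≠ t₄, …, t_{k−1} ≠ t_{k+1}`.  The whole chain `t₁, …, t_{k+1}` is encoded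
as a dependent function `t : (j : Fin (k+1)) → Fin (dims j)`, and indices in different
index sets are compared through their values. -/
def diamond {k : ℕ} (dims : Fin (k + 1) → ℕ)
    (H : (j : Fin k) → Matrix (Fin (dims j.castSucc)) (Fin (dims j.succ)) ℍ[ℝ]) :
    Matrix (Fin (dims 0)) (Fin (dims (Fin.last k))) ℍ[ℝ] :=
  fun α β =>
    ∑ t ∈ Finset.univ.filter
      (fun t : (j : Fin (k + 1)) → Fin (dims j) =>
        t 0 = α ∧ t (Fin.last k) = β ∧
        ∀ i : Fin (k + 1), ∀ h : i.val + 2 < k + 1,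
          (t i).val ≠ (t ⟨i.val + 2, h⟩).val),
      (List.ofFn (fun j : Fin k => H j (t j.castSucc) (t j.succ))).prod

theorem qn_quat_sq (q : ℍ[ℝ]) : ‖q‖ ^ 2 = q.re ^ 2 + q.imI ^ 2 + q.imJ ^ 2 + q.imK ^ 2 := by
  rw [sq, ← Quaternion.normSq_eq_norm_mul_self, Quaternion.normSq_def']

theorem quatToC2_mul (p q : ℍ[ℝ]) : quatToC2 (p * q) = quatToC2 p * quatToC2 q := by
  ext i j
  fin_cases i <;> fin_cases j <;>
    simp [quatToC2, Matrix.mul_apply, Fin.sum_univ_two, Complex.ext_iff] <;>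
    constructor <;> ring

theorem quatToC2_add (p q : ℍ[ℝ]) : quatToC2 (p + q) = quatToC2 p + quatToC2 q := by
  ext i j
  fin_cases i <;> fin_cases j <;>
    simp [quatToC2, Complex.ext_iff] <;> ring

theorem quatToC2_sub (p q : ℍ[ℝ]) : quatToC2 (p - q) = quatToC2 p - quatToC2 q := by
  ext i j
  fin_cases i <;> fin_cases j <;>
    simp [quatToC2, Complex.ext_iff] <;> ring

theorem quatToC2_zero : quatToC2 0 = 0 := by
  ext i j
  fin_cases i <;> fin_cases j <;> simp [quatToC2]

theorem quatToC2_star (p : ℍ[ℝ]) : quatToC2 (star p) = (quatToC2 p)ᴴ := by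
  ext i j
  fin_cases i <;> fin_cases j <;>
    simp [quatToC2, Complex.ext_iff]

theorem quatToC2_sum {ι : Type*} (s : Finset ι) (f : ι → ℍ[ℝ]) :
    quatToC2 (∑ i ∈ s, f i) = ∑ i ∈ s, quatToC2 (f i) := by
  classical
  induction s using Finset.induction_on with
  | empty => simp [quatToC2_zero]
  | insert a s ha ih => rw [Finset.sum_insert ha, Finset.sum_insert ha, quatToC2_add, ih]

theorem quatToC2_norm (q : ℍ[ℝ]) (w : Fin 2 → ℂ) :
    ‖WithLp.toLp 2 (quatToC2 q *ᵥ w)‖ = ‖q‖ * ‖WithLp.toLp 2 w‖ := by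
  rw [← sq_eq_sq₀ (by positivity) (by positivity), mul_pow, qn_quat_sq,
    EuclideanSpace.norm_sq_eq, EuclideanSpace.norm_sq_eq]
  simp only [Fin.sum_univ_two, Matrix.mulVec, dotProduct, ← Complex.normSq_eq_norm_sq,
    Complex.normSq_apply]
  simp [quatToC2]
  ring

theorem psi_mul {p n m : ℕ} (A : Matrix (Fin p) (Fin n) ℍ[ℝ]) (B : Matrix (Fin n) (Fin m) ℍ[ℝ]) :
    psi (A * B) = psi A * psi B := by
  ext i j
  simp only [psi, Matrix.mul_apply, quatToC2_sum, quatToC2_mul, Matrix.sum_apply,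
    Fintype.sum_prod_type]

theorem psi_add {p n : ℕ} (A B : Matrix (Fin p) (Fin n) ℍ[ℝ]) :
    psi (A + B) = psi A + psi B := by
  ext i j
  simp [psi, quatToC2_add]

theorem psi_sub {p n : ℕ} (A B : Matrix (Fin p) (Fin n) ℍ[ℝ]) :
    psi (A - B) = psi A - psi B := by
  ext i j
  simp [psi, quatToC2_sub]

theorem psi_star {p n : ℕ} (A : Matrix (Fin p) (Fin n) ℍ[ℝ]) :
    psi (Aᴴ) = (psi A)ᴴ := by
  ext i j
  simp [psi, quatToC2_star, Matrix.conjTranspose_apply]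

section
open scoped Matrix.Norms.L2Operator

theorem qn_eq {p n : ℕ} (A : Matrix (Fin p) (Fin n) ℍ[ℝ]) : quatNorm2 A = ‖psi A‖ := rfl

theorem qn_mul {p n m : ℕ} (A : Matrix (Fin p) (Fin n) ℍ[ℝ]) (B : Matrix (Fin n) (Fin m) ℍ[ℝ]) :
    quatNorm2 (A * B) ≤ quatNorm2 A * quatNorm2 B := by
  rw [qn_eq, qn_eq, qn_eq, psi_mul]
  exact Matrix.l2_opNorm_mul _ _

theorem qn_add {p n : ℕ} (A B : Matrix (Fin p) (Fin n) ℍ[ℝ]) :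
    quatNorm2 (A + B) ≤ quatNorm2 A + quatNorm2 B := by
  rw [qn_eq, qn_eq, qn_eq, psi_add]
  exact norm_add_le _ _

theorem qn_sub {p n : ℕ} (A B : Matrix (Fin p) (Fin n) ℍ[ℝ]) :
    quatNorm2 (A - B) ≤ quatNorm2 A + quatNorm2 B := by
  rw [qn_eq, qn_eq, qn_eq, psi_sub]
  exact norm_sub_le _ _

theorem qn_star {p n : ℕ} (A : Matrix (Fin p) (Fin n) ℍ[ℝ]) :
    quatNorm2 (Aᴴ) = quatNorm2 A := by
  rw [qn_eq, qn_eq, psi_star]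
  exact Matrix.l2_opNorm_conjTranspose _

end

theorem qn_nonneg {p n : ℕ} (A : Matrix (Fin p) (Fin n) ℍ[ℝ]) : 0 ≤ quatNorm2 A :=
  norm_nonneg _

theorem qn_col {p n : ℕ} (A : Matrix (Fin p) (Fin n) ℍ[ℝ]) (b : Fin n) :
    ∑ a, ‖A a b‖ ^ 2 ≤ quatNorm2 A ^ 2 := by
  have h := (LinearMap.toContinuousLinearMap (Matrix.toEuclideanLin (psi A))).le_opNorm
    (EuclideanSpace.single (b, (0 : Fin 2)) (1 : ℂ))
  have h2 := pow_le_pow_left₀ (norm_nonneg _) h 2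
  rw [EuclideanSpace.norm_sq_eq] at h2
  simp only [LinearMap.coe_toContinuousLinearMap', Matrix.toLpLin_apply,
    PiLp.norm_single, norm_one, mul_one, Fintype.sum_prod_type] at h2
  refine le_trans (le_of_eq ?_) h2
  refine Finset.sum_congr rfl fun a _ => ?_
  simp only [PiLp.ofLp_single, Matrix.mulVec_single_one, Fin.sum_univ_two, Matrix.col_apply, psi,
    qn_quat_sq, ← Complex.normSq_eq_norm_sq, Complex.normSq_apply]
  simp [quatToC2]
  ring

theorem qn_row {p n : ℕ} (A : Matrix (Fin p) (Fin n) ℍ[ℝ]) (a : Fin p) :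
    ∑ b, ‖A a b‖ ^ 2 ≤ quatNorm2 A ^ 2 := by
  have h := qn_col (Aᴴ) a
  simpa [Matrix.conjTranspose_apply, qn_star] using h

theorem qn_entry {p n : ℕ} (A : Matrix (Fin p) (Fin n) ℍ[ℝ]) (a : Fin p) (b : Fin n) :
    ‖A a b‖ ≤ quatNorm2 A := by
  refine le_of_sq_le_sq ?_ (qn_nonneg A)
  exact (Finset.single_le_sum (f := fun b => ‖A a b‖ ^ 2) (fun _ _ => by positivity)
    (Finset.mem_univ b)).trans (qn_row A a)

theorem qn_schur {p n : ℕ} (K : Matrix (Fin p) (Fin n) ℍ[ℝ]) (x y : Fin p → Fin n → ℝ) (X Y : ℝ)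
    (hX : 0 ≤ X) (hY : 0 ≤ Y)
    (hK : ∀ a b, ‖K a b‖ ≤ x a b * y a b)
    (hx : ∀ a, ∑ b, x a b ^ 2 ≤ X ^ 2) (hy : ∀ b, ∑ a, y a b ^ 2 ≤ Y ^ 2) :
    quatNorm2 K ≤ X * Y := by
  refine ContinuousLinearMap.opNorm_le_bound _ (by positivity) fun v => ?_
  refine le_of_sq_le_sq ?_ (by positivity)
  let w : Fin n → EuclideanSpace ℂ (Fin 2) := fun b => WithLp.toLp 2 (fun s => v (b, s))
  have hv : ‖v‖ ^ 2 = ∑ b, ‖w b‖ ^ 2 := by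
    simp only [EuclideanSpace.norm_sq_eq, Fintype.sum_prod_type, w]
  have key : ∀ a, ‖∑ b, WithLp.toLp 2 (quatToC2 (K a b) *ᵥ (w b).ofLp)‖ ^ 2
      ≤ X ^ 2 * ∑ b, y a b ^ 2 * ‖w b‖ ^ 2 := by
    intro a
    have h1 : ‖∑ b, WithLp.toLp 2 (quatToC2 (K a b) *ᵥ (w b).ofLp)‖
        ≤ ∑ b, x a b * (y a b * ‖w b‖) := by
      refine (norm_sum_le _ _).trans (Finset.sum_le_sum fun b _ => ?_)
      rw [quatToC2_norm, ← mul_assoc]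
      exact mul_le_mul_of_nonneg_right (hK a b) (norm_nonneg _)
    calc _ ≤ (∑ b, x a b * (y a b * ‖w b‖)) ^ 2 := pow_le_pow_left₀ (norm_nonneg _) h1 2
      _ ≤ (∑ b, x a b ^ 2) * ∑ b, (y a b * ‖w b‖) ^ 2 := Finset.sum_mul_sq_le_sq_mul_sq _ _ _
      _ ≤ X ^ 2 * ∑ b, y a b ^ 2 * ‖w b‖ ^ 2 := by
        simp only [mul_pow]
        exact mul_le_mul_of_nonneg_right (hx a) (Finset.sum_nonneg fun _ _ => by positivity)
  have hT : ‖(LinearMap.toContinuousLinearMap (Matrix.toEuclideanLin (psi K))) v‖ ^ 2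
      = ∑ a, ‖∑ b, WithLp.toLp 2 (quatToC2 (K a b) *ᵥ (w b).ofLp)‖ ^ 2 := by
    simp only [EuclideanSpace.norm_sq_eq, Fintype.sum_prod_type]
    refine Finset.sum_congr rfl fun a _ => Finset.sum_congr rfl fun s _ => ?_
    fin_cases s <;>
      simp [Matrix.toLpLin_apply, Matrix.mulVec, dotProduct, psi, Fintype.sum_prod_type, w]
  rw [hT]
  calc _ ≤ ∑ a, X ^ 2 * ∑ b, y a b ^ 2 * ‖w b‖ ^ 2 := Finset.sum_le_sum fun a _ => key a
    _ = X ^ 2 * ∑ b, (∑ a, y a b ^ 2) * ‖w b‖ ^ 2 := by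
      rw [← Finset.mul_sum, Finset.sum_comm]
      simp only [Finset.sum_mul]
    _ ≤ X ^ 2 * ∑ b, Y ^ 2 * ‖w b‖ ^ 2 := by
      gcongr with b
      exact hy b
    _ = (X * Y * ‖v‖) ^ 2 := by rw [← Finset.mul_sum, ← hv]; ring

theorem qn_diag {n : ℕ} (A : Matrix (Fin n) (Fin n) ℍ[ℝ]) :
    quatNorm2 (Matrix.diagonal fun a => A a a) ≤ quatNorm2 A := by
  rw [← mul_one (quatNorm2 A)]
  refine qn_schur _ (fun a b => if a = b then quatNorm2 A else 0)
    (fun a b => if a = b then 1 else 0) _ _ (qn_nonneg A) zero_le_one ?_ ?_ ?_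
  · intro a b
    by_cases h : a = b
    · subst h; simpa using qn_entry A a a
    · simp [h]
  · intro a; simp [ite_pow]
  · intro a; simp [ite_pow]

theorem qn_triple {n : ℕ} (A B C : Matrix (Fin n) (Fin n) ℍ[ℝ]) :
    quatNorm2 (Matrix.of fun a b => A a b * B b a * C a b)
      ≤ quatNorm2 A * quatNorm2 B * quatNorm2 C := by
  refine qn_schur _ (fun a b => ‖A a b‖ * quatNorm2 B) (fun a b => ‖C a b‖) _ _
    (mul_nonneg (qn_nonneg A) (qn_nonneg B)) (qn_nonneg C) ?_ ?_ ?_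
  · intro a b
    simp only [Matrix.of_apply, norm_mul]
    gcongr
    exact qn_entry B b a
  · intro a
    simp only [mul_pow, ← Finset.sum_mul]
    exact mul_le_mul_of_nonneg_right (qn_row A a) (by positivity)
  · exact qn_col C

/-- The 0/1 matrix of an index embedding. -/
def embMat {m n : ℕ} (f : Fin m → Fin n) : Matrix (Fin m) (Fin n) ℍ[ℝ] :=
  fun a b => if f a = b then 1 else 0

theorem qn_embMat {m n : ℕ} (f : Fin m → Fin n) (hf : Function.Injective f) :
    quatNorm2 (embMat f) ≤ 1 := by
  rw [← mul_one (1 : ℝ)]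
  refine qn_schur _ (fun a b => if f a = b then 1 else 0)
    (fun a b => if f a = b then 1 else 0) _ _ zero_le_one zero_le_one ?_ ?_ ?_
  · intro a b
    by_cases h : f a = b <;> simp [h, embMat]
  · intro a; simp [ite_pow]
  · intro b
    simp only [ite_pow, one_pow, ne_eq, OfNat.ofNat_ne_zero, not_false_eq_true, zero_pow]
    rw [Finset.sum_boole]
    norm_cast
    refine Finset.card_le_one.2 fun a ha c hc => hf ?_
    simp at ha hc
    rw [ha, hc]

/-- Zero-padding of a matrix along index embeddings. -/
def padMat {m n N : ℕ} (f : Fin m → Fin N) (g : Fin n → Fin N) (A : Matrix (Fin m) (Fin n) ℍ[ℝ]) :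
    Matrix (Fin N) (Fin N) ℍ[ℝ] := (embMat f)ᴴ * A * embMat g

theorem padMat_apply {m n N : ℕ} (f : Fin m → Fin N) (g : Fin n → Fin N)
    (A : Matrix (Fin m) (Fin n) ℍ[ℝ]) (x y : Fin N) :
    padMat f g A x y = ∑ b, ∑ a, if f a = x ∧ g b = y then A a b else 0 := by
  simp only [padMat, Matrix.mul_apply, embMat, Matrix.conjTranspose_apply, Finset.sum_mul]
  refine Finset.sum_congr rfl fun b _ => Finset.sum_congr rfl fun a _ => ?_
  by_cases h : f a = x <;> by_cases h' : g b = y <;> simp [h, h']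

theorem padMat_emb {m n N : ℕ} (f : Fin m → Fin N) (g : Fin n → Fin N)
    (hf : Function.Injective f) (hg : Function.Injective g)
    (A : Matrix (Fin m) (Fin n) ℍ[ℝ]) (a : Fin m) (b : Fin n) :
    padMat f g A (f a) (g b) = A a b := by
  simp [padMat_apply, hf.eq_iff, hg.eq_iff, ite_and]

theorem padMat_left {m n N : ℕ} (f : Fin m → Fin N) (g : Fin n → Fin N)
    (A : Matrix (Fin m) (Fin n) ℍ[ℝ]) (x y : Fin N) (h : ∀ a, f a ≠ x) :
    padMat f g A x y = 0 := by
  simp [padMat_apply, h]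

theorem padMat_right {m n N : ℕ} (f : Fin m → Fin N) (g : Fin n → Fin N)
    (A : Matrix (Fin m) (Fin n) ℍ[ℝ]) (x y : Fin N) (h : ∀ a, g a ≠ y) :
    padMat f g A x y = 0 := by
  simp [padMat_apply, h]

theorem qn_padMat {m n N : ℕ} (f : Fin m → Fin N) (g : Fin n → Fin N)
    (hf : Function.Injective f) (hg : Function.Injective g)
    (A : Matrix (Fin m) (Fin n) ℍ[ℝ]) : quatNorm2 (padMat f g A) ≤ quatNorm2 A := by
  have h1 := qn_embMat f hf
  have h2 := qn_embMat g hg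
  calc _ ≤ quatNorm2 ((embMat f)ᴴ) * quatNorm2 A * quatNorm2 (embMat g) :=
        (qn_mul _ _).trans (mul_le_mul_of_nonneg_right (qn_mul _ _) (qn_nonneg _))
    _ ≤ 1 * quatNorm2 A * 1 := by
        rw [qn_star]
        have := qn_nonneg A
        have := qn_nonneg (embMat g)
        gcongr
    _ = _ := by ring

theorem qn_submatrix {m n N : ℕ} (f : Fin m → Fin N) (g : Fin n → Fin N)
    (hf : Function.Injective f) (hg : Function.Injective g)
    (A : Matrix (Fin N) (Fin N) ℍ[ℝ]) : quatNorm2 (A.submatrix f g) ≤ quatNorm2 A := by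
  have h1 := qn_embMat f hf
  have h2 := qn_embMat g hg
  have e : A.submatrix f g = embMat f * A * (embMat g)ᴴ := by
    ext a b : 1
    simp only [Matrix.submatrix_apply, Matrix.mul_apply, embMat, Matrix.conjTranspose_apply]
    simp [apply_ite]
  calc _ ≤ quatNorm2 (embMat f) * quatNorm2 A * quatNorm2 ((embMat g)ᴴ) := by
        rw [e]
        exact (qn_mul _ _).trans (mul_le_mul_of_nonneg_right (qn_mul _ _) (qn_nonneg _))
    _ ≤ 1 * quatNorm2 A * 1 := by
        rw [qn_star]
        have := qn_nonneg A
        have := qn_nonneg (embMat g)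
        gcongr
    _ = _ := by ring

/-- Sum over admissible paths through the matrices of a list, starting at `a`, ending at `β`,
where the second vertex must differ from `p`. -/
def pathSum {N : ℕ} : List (Matrix (Fin N) (Fin N) ℍ[ℝ]) → Option (Fin N) → Fin N → Fin N → ℍ[ℝ]
  | [], _, a, β => if a = β then 1 else 0
  | M :: L, p, a, β => ∑ b, if p ≠ some b then M a b * pathSum L (some a) b β else 0

/-- The diamond product of a list of square matrices. -/
def listDiamond {N : ℕ} (L : List (Matrix (Fin N) (Fin N) ℍ[ℝ])) : Matrix (Fin N) (Fin N) ℍ[ℝ] :=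
  fun a β => pathSum L none a β

theorem listDiamond_cons {N : ℕ} (M : Matrix (Fin N) (Fin N) ℍ[ℝ]) (L) (a β : Fin N) :
    listDiamond (M :: L) a β = ∑ b, M a b * pathSum L (some a) b β := by
  simp [listDiamond, pathSum]

theorem pathSum_some {N : ℕ} (M : Matrix (Fin N) (Fin N) ℍ[ℝ]) (L) (p a β : Fin N) :
    pathSum (M :: L) (some p) a β =
      listDiamond (M :: L) a β - M a p * pathSum L (some a) p β := by
  rw [listDiamond_cons, pathSum, eq_sub_iff_add_eq]
  have : M a p * pathSum L (some a) p β =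
      ∑ b, if p = b then M a b * pathSum L (some a) b β else 0 := by simp
  rw [this, ← Finset.sum_add_distrib]
  refine Finset.sum_congr rfl fun b _ => ?_
  by_cases h : p = b <;> simp [h]

theorem listDiamond_one {N : ℕ} (A : Matrix (Fin N) (Fin N) ℍ[ℝ]) : listDiamond [A] = A := by
  refine Matrix.ext fun a b => ?_
  simp [listDiamond_cons, pathSum]

theorem listDiamond_two {N : ℕ} (A B : Matrix (Fin N) (Fin N) ℍ[ℝ]) :
    listDiamond [A, B] = A * B - Matrix.diagonal fun a => (A * B) a a := by
  refine Matrix.ext fun a b => ?_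
  rw [listDiamond_cons]
  simp only [pathSum_some, listDiamond_one]
  simp only [pathSum, Matrix.sub_apply, Matrix.diagonal_apply,
    Matrix.mul_apply, mul_sub, Finset.sum_sub_distrib]
  by_cases h : a = b <;> simp [h]

theorem listDiamond_three {N : ℕ} (A B C : Matrix (Fin N) (Fin N) ℍ[ℝ]) (L) :
    listDiamond (A :: B :: C :: L) = A * listDiamond (B :: C :: L)
      - (Matrix.diagonal fun a => (A * B) a a) * listDiamond (C :: L)
      + listDiamond ((Matrix.of fun a b => A a b * B b a * C a b) :: L) := by
  refine Matrix.ext fun a β => ?_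
  rw [listDiamond_cons]
  simp only [pathSum_some, Matrix.sub_apply, Matrix.add_apply, Matrix.diagonal_mul]
  simp only [Matrix.mul_apply, mul_sub, Finset.sum_sub_distrib, Finset.sum_mul, mul_assoc]
  rw [listDiamond_cons (Matrix.of _)]
  simp only [Matrix.of_apply, mul_assoc]
  abel

theorem three_step_arith (T M B C Q : ℝ) (hT : 0 ≤ T) (hM : 0 ≤ M) (hB : 0 ≤ B) (hC : 0 ≤ C)
    (hQ : 0 ≤ Q) :
    M * (T * 3 * (B * (C * Q))) + M * B * (T * (C * Q)) + T * (M * B * C * Q) ≤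
      T * 3 * 3 * (M * (B * (C * Q))) := by
  have h : 0 ≤ 4 * (T * (M * B * C * Q)) := by positivity
  rw [← sub_nonneg]
  refine h.trans (le_of_eq ?_)
  ring

theorem listDiamond_norm {N : ℕ} : ∀ (n : ℕ) (L : List (Matrix (Fin N) (Fin N) ℍ[ℝ]))
    (M : Matrix (Fin N) (Fin N) ℍ[ℝ]), L.length ≤ n →
    quatNorm2 (listDiamond (M :: L)) ≤ 3 ^ L.length * (quatNorm2 M * (L.map quatNorm2).prod) := by
  intro n
  induction n with
  | zero =>
    intro L M hL
    obtain rfl : L = [] := by simpa using hL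
    simp [listDiamond_one]
  | succ n ih =>
    intro L M hL
    match L, hL with
    | [], _ => simp [listDiamond_one]
    | [B], _ =>
      rw [listDiamond_two]
      have h1 := qn_sub (M * B) (Matrix.diagonal fun a => (M * B) a a)
      have h2 := qn_diag (M * B)
      have h3 := qn_mul M B
      have h4 := qn_nonneg (M * B)
      simp
      linarith
    | B :: C :: L, hL =>
      rw [listDiamond_three]
      simp only [List.length_cons] at hL
      have P : 0 ≤ (L.map quatNorm2).prod := List.prod_nonneg (by
        intro x hx
        obtain ⟨A, _, rfl⟩ := List.mem_map.1 hx
        exact qn_nonneg A)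
      have hM := qn_nonneg M
      have hB := qn_nonneg B
      have hC := qn_nonneg C
      have i1 := ih (C :: L) B (by simp only [List.length_cons]; omega)
      have i2 := ih L C (by omega)
      have i3 := ih L (Matrix.of fun a b => M a b * B b a * C a b) (by omega)
      have j1 := (qn_mul M (listDiamond (B :: C :: L))).trans (mul_le_mul_of_nonneg_left i1 hM)
      have j2 := (qn_mul (Matrix.diagonal fun a => (M * B) a a) (listDiamond (C :: L))).trans
        (mul_le_mul ((qn_diag (M * B)).trans (qn_mul M B)) i2 (qn_nonneg _) (by positivity))
      have j3 := i3.trans (mul_le_mul_of_nonneg_left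
        (mul_le_mul_of_nonneg_right (qn_triple M B C) P) (by positivity))
      have k1 := qn_add (M * listDiamond (B :: C :: L)
        - (Matrix.diagonal fun a => (M * B) a a) * listDiamond (C :: L))
        (listDiamond ((Matrix.of fun a b => M a b * B b a * C a b) :: L))
      have k2 := qn_sub (M * listDiamond (B :: C :: L))
        ((Matrix.diagonal fun a => (M * B) a a) * listDiamond (C :: L))
      simp only [List.map_cons, List.prod_cons, List.length_cons, pow_succ] at j1 ⊢
      have k3 := k1.trans (add_le_add (k2.trans (add_le_add j1 j2)) j3)
      exact k3.trans (three_step_arith _ _ _ _ _ (by positivity) hM hB hC P)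

open Classical in
theorem pathSum_ofFn {N : ℕ} : ∀ (k : ℕ) (H : Fin k → Matrix (Fin N) (Fin N) ℍ[ℝ])
    (p : Option (Fin N)) (a β : Fin N),
    pathSum (List.ofFn H) p a β = ∑ t : Fin (k + 1) → Fin N,
      if t 0 = a ∧ t (Fin.last k) = β ∧
        (∀ i : Fin (k + 1), ∀ h : i.val + 2 < k + 1, t i ≠ t ⟨i.val + 2, h⟩) ∧
        (∀ h : 1 < k + 1, p ≠ some (t ⟨1, h⟩))
      then (List.ofFn (fun j : Fin k => H j (t j.castSucc) (t j.succ))).prod else 0 := by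
  intro k
  induction k with
  | zero =>
    intro H p a β
    rw [Fintype.sum_equiv (Equiv.funUnique (Fin 1) (Fin N)) _
      (fun x => if x = a ∧ x = β then 1 else 0)]
    · simp [pathSum, ite_and]
    · intro t
      rw [List.ofFn_zero, List.prod_nil]
      refine if_congr ⟨fun h => ⟨h.1, h.2.1⟩, fun h => ⟨h.1, h.2, fun i h' => ?_, fun h' => ?_⟩⟩ rfl rfl
      · omega
      · omega
  | succ k ih =>
    intro H p a β
    rw [List.ofFn_succ, pathSum]
    simp only [ih]
    rw [← Fintype.sum_equiv (Fin.consEquiv (fun _ : Fin (k + 2) => Fin N)) _ _ (fun _ => rfl)]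
    rw [Fintype.sum_prod_type]
    have cond : ∀ (x : Fin N) (t : Fin (k + 1) → Fin N),
        (∀ i : Fin (k + 2), ∀ h : i.val + 2 < k + 2,
          (Fin.cons x t : Fin (k + 2) → Fin N) i ≠
            (Fin.cons x t : Fin (k + 2) → Fin N) ⟨i.val + 2, h⟩) ↔
        ((∀ i : Fin (k + 1), ∀ h : i.val + 2 < k + 1, t i ≠ t ⟨i.val + 2, h⟩) ∧
        (∀ h : 1 < k + 1, some x ≠ some (t ⟨1, h⟩))) := by
      intro x t
      rw [Fin.forall_fin_succ, and_comm]
      refine and_congr ?_ ?_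
      · refine forall_congr' fun i => ?_
        constructor
        · intro h h'
          exact h (by simp; omega)
        · intro h h'
          exact h (by simp at h'; omega)
      · constructor
        · intro h h' e
          exact h (by simp; omega) (Option.some.inj e)
        · intro h h' e
          exact h (by simp at h'; omega) (congrArg some e)
    have e2 : ∀ (x : Fin N) (t : Fin (k + 1) → Fin N),
        (if (Fin.cons x t : Fin (k + 2) → Fin N) 0 = a ∧
          (Fin.cons x t : Fin (k + 2) → Fin N) (Fin.last (k + 1)) = β ∧
        (∀ i : Fin (k + 2), ∀ h : i.val + 2 < k + 2,
          (Fin.cons x t : Fin (k + 2) → Fin N) i ≠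
            (Fin.cons x t : Fin (k + 2) → Fin N) ⟨i.val + 2, h⟩) ∧
        (∀ h : 1 < k + 2, p ≠ some ((Fin.cons x t : Fin (k + 2) → Fin N) ⟨1, h⟩))
        then (List.ofFn (fun j : Fin (k + 1) =>
          H j ((Fin.cons x t : Fin (k + 2) → Fin N) j.castSucc)
            ((Fin.cons x t : Fin (k + 2) → Fin N) j.succ))).prod else 0) =
        if x = a then (if (t (Fin.last k) = β ∧
          (∀ i : Fin (k + 1), ∀ h : i.val + 2 < k + 1, t i ≠ t ⟨i.val + 2, h⟩) ∧
          (∀ h : 1 < k + 1, some x ≠ some (t ⟨1, h⟩))) ∧ p ≠ some (t 0) then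
          H 0 x (t 0) * (List.ofFn (fun j : Fin k =>
            H j.succ (t j.castSucc) (t j.succ))).prod else 0) else 0 := by
      intro x t
      rw [← ite_and, List.ofFn_succ, List.prod_cons]
      have c1 : (∀ h : 1 < k + 2, p ≠ some ((Fin.cons x t : Fin (k + 2) → Fin N) ⟨1, h⟩))
          ↔ p ≠ some (t 0) := ⟨fun h => h (by omega), fun h _ => h⟩
      have c2 : (Fin.cons x t : Fin (k + 2) → Fin N) (Fin.last (k + 1)) = t (Fin.last k) := rfl
      refine if_congr ?_ rfl rfl
      rw [cond x t, c1, c2, Fin.cons_zero]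
      tauto
    refine Eq.trans ?_ (Finset.sum_congr rfl fun x _ =>
      Finset.sum_congr rfl fun t _ => (e2 x t).symm)
    rw [Finset.sum_comm (s := (Finset.univ : Finset (Fin N)))
      (t := (Finset.univ : Finset (Fin (k + 1) → Fin N)))]
    simp only [Finset.sum_ite_eq', Finset.mem_univ, if_true]
    have e3 : ∀ b : Fin N, (if p ≠ some b then H 0 a b * ∑ t : Fin (k + 1) → Fin N,
        (if t 0 = b ∧ t (Fin.last k) = β ∧
        (∀ i : Fin (k + 1), ∀ h : i.val + 2 < k + 1, t i ≠ t ⟨i.val + 2, h⟩) ∧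
        (∀ h : 1 < k + 1, some a ≠ some (t ⟨1, h⟩))
      then (List.ofFn (fun j : Fin k => H j.succ (t j.castSucc) (t j.succ))).prod else 0) else 0)
      = ∑ t : Fin (k + 1) → Fin N, if t 0 = b then
        (if (t (Fin.last k) = β ∧
          (∀ i : Fin (k + 1), ∀ h : i.val + 2 < k + 1, t i ≠ t ⟨i.val + 2, h⟩) ∧
          (∀ h : 1 < k + 1, some a ≠ some (t ⟨1, h⟩))) ∧ p ≠ some (t 0) then
          H 0 a (t 0) * (List.ofFn (fun j : Fin k =>
            H j.succ (t j.castSucc) (t j.succ))).prod else 0) else 0 := by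
      intro b
      by_cases hp : p = some b
      · rw [if_neg (by simpa using hp)]
        symm
        refine Finset.sum_eq_zero fun t _ => ?_
        by_cases ht : t 0 = b
        · rw [if_pos ht, if_neg]
          rintro ⟨_, h⟩
          exact h (by rw [hp, ht])
        · rw [if_neg ht]
      · rw [if_pos hp, Finset.mul_sum]
        refine Finset.sum_congr rfl fun t _ => ?_
        by_cases ht : t 0 = b
        · subst ht
          simp only [true_and, if_true, mul_ite, mul_zero]
          refine if_congr ?_ rfl rfl
          exact ⟨fun h => ⟨h, hp⟩, fun h => h.1⟩
        · rw [if_neg ht, if_neg (fun h => ht h.1), mul_zero]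
    refine (Finset.sum_congr rfl fun b _ => e3 b).trans ?_
    rw [Finset.sum_comm]
    simp only [Finset.sum_ite_eq, Finset.mem_univ, if_true]

theorem diamond_eq_pad {k : ℕ} (hk : 1 ≤ k) (dims : Fin (k + 1) → ℕ)
    (H : (j : Fin k) → Matrix (Fin (dims j.castSucc)) (Fin (dims j.succ)) ℍ[ℝ])
    (N : ℕ) (hN : ∀ j, dims j ≤ N) :
    diamond dims H = (listDiamond (List.ofFn fun j : Fin k =>
      padMat (Fin.castLE (hN j.castSucc)) (Fin.castLE (hN j.succ)) (H j))).submatrix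
        (Fin.castLE (hN 0)) (Fin.castLE (hN (Fin.last k))) := by
  classical
  refine Matrix.ext fun α β => ?_
  rw [Matrix.submatrix_apply, listDiamond, pathSum_ofFn, ← Finset.sum_filter, diamond]
  have inj : ∀ j, Function.Injective (Fin.castLE (hN j)) := fun j => Fin.castLE_injective _
  refine Finset.sum_of_injOn (fun (t : (j : Fin (k + 1)) → Fin (dims j)) j => Fin.castLE (hN j) (t j)) ?_ ?_ ?_ ?_
  · intro t _ t' _ h
    funext j
    exact inj j (congrFun h j)
  · intro t ht
    simp only [Finset.coe_filter, Finset.mem_univ, true_and, Set.mem_ofPred_eq] at ht ⊢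
    refine ⟨by rw [ht.1], by rw [ht.2.1], fun i h e => ht.2.2 i h ?_, fun h => by simp⟩
    exact congrArg Fin.val e
  · intro t ht hne
    simp only [Finset.mem_filter, Finset.mem_univ, true_and] at ht
    by_cases hr : ∀ j : Fin (k + 1), (t j).val < dims j
    · exfalso
      apply hne
      refine ⟨fun j => ⟨t j, hr j⟩, ?_, ?_⟩
      · simp only [Finset.coe_filter, Finset.mem_univ, true_and, Set.mem_ofPred_eq]
        refine ⟨?_, ?_, fun i h e => ht.2.2.1 i h (Fin.ext e)⟩
        · have e := Fin.ext_iff.1 ht.1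
          exact Fin.ext e
        · have e := Fin.ext_iff.1 ht.2.1
          exact Fin.ext e
      · rfl
    · push Not at hr
      obtain ⟨j, hj⟩ := hr
      have hz : ∀ a, Fin.castLE (hN j) a ≠ t j := by
        intro a e
        have := congrArg Fin.val e
        simp at this
        omega
      apply List.prod_eq_zero
      rw [List.mem_ofFn]
      induction j using Fin.lastCases with
      | last =>
        obtain ⟨m, rfl⟩ : ∃ m, k = m + 1 := ⟨k - 1, by omega⟩
        exact ⟨Fin.last m, padMat_right _ _ _ _ _ hz⟩
      | cast j => exact ⟨j, padMat_left _ _ _ _ _ hz⟩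
  · intro t _
    simp only [padMat_emb _ _ (inj _) (inj _)]

/-- **Lemma 3.8.** For `k` quaternion matrices `H₁,…,H_k`, with `H j` of dimensions
`n_j × n_{j+1}`, the diamond product satisfies
`‖H₁ ⋄ ⋯ ⋄ H_k‖₂ ≤ 3^{k−1} ‖H₁‖₂ ⋯ ‖H_k‖₂`. -/
theorem diamond_norm_le {k : ℕ} (hk : 1 ≤ k) (dims : Fin (k + 1) → ℕ)
    (H : (j : Fin k) → Matrix (Fin (dims j.castSucc)) (Fin (dims j.succ)) ℍ[ℝ]) :
    quatNorm2 (diamond dims H) ≤ 3 ^ (k - 1) * ∏ j : Fin k, quatNorm2 (H j) := by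
  classical
  have hN : ∀ j, dims j ≤ ∑ j, dims j := fun j =>
    Finset.single_le_sum (f := dims) (fun _ _ => Nat.zero_le _) (Finset.mem_univ j)
  rw [diamond_eq_pad hk dims H _ hN]
  refine (qn_submatrix _ _ (Fin.castLE_injective _) (Fin.castLE_injective _) _).trans ?_
  obtain ⟨m, rfl⟩ : ∃ m, k = m + 1 := ⟨k - 1, by omega⟩
  rw [List.ofFn_succ]
  refine (listDiamond_norm _ _ _ le_rfl).trans ?_
  rw [List.length_ofFn, List.map_ofFn, List.prod_ofFn, Nat.add_sub_cancel, Fin.prod_univ_succ]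
  have inj : ∀ j, Function.Injective (Fin.castLE (hN j)) := fun j => Fin.castLE_injective _
  refine mul_le_mul_of_nonneg_left ?_ (by positivity)
  refine mul_le_mul (qn_padMat _ _ (inj _) (inj _) _) ?_
    (Finset.prod_nonneg fun _ _ => qn_nonneg _) (qn_nonneg _)
  exact Finset.prod_le_prod (fun _ _ => qn_nonneg _)
    (fun j _ => qn_padMat _ _ (inj _) (inj _) _)

end
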